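/- Let A and E_1,…,E_m be n×n complex matrices, let r0 ∈ ℂⁿ, and let V be an n×(m+1) complex matrix with orthonormal columns v_1,…,v_{m+1}; write V_m for its first m columns. Let H̄ be a (m+1)×m complex matrix such that the inexact Arnoldi relation (A + E_i)·v_i = V·H̄·e_i holds for every i = 1,…,m. Then for every y ∈ ℂᵐ, the true residual r = r0 − A·V_m·y and the computed residual r̃ = r0 − V·H̄·y satisfy r − r̃ = Σ_{i=1}^m y_i · E_i·v_i, and consequently ‖r − r̃‖ ≤ Σ_{i=1}^m |y_i| · ‖E_i‖. -/

import Mathlib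

open Matrix

/-- Euclidean (ℓ²) norm of a complex vector. -/
noncomputable def vecNorm {n : ℕ} (v : Fin n → ℂ) : ℝ :=
  ‖(WithLp.equiv 2 (Fin n → ℂ)).symm v‖

/-- Operator (spectral) norm of a complex matrix, induced by the Euclidean vector norm. -/
noncomputable def matNorm {m n : ℕ} (A : Matrix (Fin m) (Fin n) ℂ) : ℝ :=
  sSup ((fun y => vecNorm (A.mulVec y)) '' {y | vecNorm y ≤ 1})

/-- Smallest singular value of a (tall) complex matrix:
`σ_min(B) = inf {‖B·y‖ : ‖y‖ = 1}`. -/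
noncomputable def sigMin {p q : ℕ} (B : Matrix (Fin p) (Fin q) ℂ) : ℝ :=
  sInf ((fun y => vecNorm (B.mulVec y)) '' {y | vecNorm y = 1})

/-- The leading (j+1)×j submatrix of a (m+1)×m matrix. -/
def lead {m : ℕ} (H : Matrix (Fin (m + 1)) (Fin m) ℂ) (j : ℕ) (hj : j ≤ m) :
    Matrix (Fin (j + 1)) (Fin j) ℂ :=
  fun i l => H (Fin.castLE (Nat.succ_le_succ hj) i) (Fin.castLE hj l)

section ArnoldiRelation

variable {R ι m n : Type*} [Fintype ι]

theorem mulVec_eq_sum_smul_col [CommSemiring R] (M : Matrix m ι R) (y : ι → R) :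
    M *ᵥ y = ∑ i, y i • M.col i := by
  simp only [mulVec_eq_sum, op_smul_eq_smul]
  rfl

theorem mulVec_sub_mulVec_mulVec_eq_sum [CommRing R] [Fintype n]
    {A : Matrix m n R} {E : ι → Matrix m n R} {W : Matrix n ι R} {B : Matrix m ι R}
    (hArnoldi : ∀ i, (A + E i) *ᵥ W.col i = B.col i) (y : ι → R) :
    B *ᵥ y - A *ᵥ (W *ᵥ y) = ∑ i, y i • E i *ᵥ W.col i := by
  calc B *ᵥ y - A *ᵥ (W *ᵥ y)
      = ∑ i, y i • ((A + E i) *ᵥ W.col i - A *ᵥ W.col i) := by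
        simp only [mulVec_eq_sum_smul_col _ y, mulVec_sum, mulVec_smul, hArnoldi, smul_sub,
          Finset.sum_sub_distrib]
    _ = ∑ i, y i • E i *ᵥ W.col i := by simp only [add_mulVec, add_sub_cancel_left]

end ArnoldiRelation

section MatrixNorms

open scoped Matrix.Norms.L2Operator

theorem matNorm_eq_l2_opNorm {m n : ℕ} (A : Matrix (Fin m) (Fin n) ℂ) : matNorm A = ‖A‖ := by
  have unitBall_image :
      (fun y => vecNorm (A.mulVec y)) '' {y | vecNorm y ≤ 1} =
        (fun x => ‖(toEuclideanLin.trans LinearMap.toContinuousLinearMap A) x‖) ''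
          Metric.closedBall (0 : EuclideanSpace ℂ (Fin n)) 1 := by
    ext c
    simp only [Set.mem_image, mem_closedBall_zero_iff]
    exact (WithLp.equiv 2 (Fin n → ℂ)).symm.exists_congr_left
  rw [matNorm, unitBall_image, ContinuousLinearMap.sSup_unitClosedBall_eq_norm, l2_opNorm_def]

variable {𝕜 ι m n : Type*} [RCLike 𝕜]

theorem orthonormal_toLp_col_iff [Fintype n] [DecidableEq ι] (V : Matrix n ι 𝕜) :
    Orthonormal 𝕜 (fun j => WithLp.toLp 2 (V.col j)) ↔ Vᴴ * V = 1 := by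
  have inner_col (i j : ι) :
      inner 𝕜 (WithLp.toLp 2 (V.col i)) (WithLp.toLp 2 (V.col j)) = (Vᴴ * V) i j := by
    rw [EuclideanSpace.inner_toLp_toLp, dotProduct_comm]
    rfl
  simp only [orthonormal_iff_ite, inner_col, ← Matrix.ext_iff, Matrix.one_apply]

theorem norm_toLp_sum_smul_mulVec_le [Fintype m] [Fintype n] [DecidableEq n]
    (s : Finset ι) (c : ι → 𝕜) (E : ι → Matrix m n 𝕜) (v : ι → n → 𝕜) :
    ‖WithLp.toLp 2 (∑ i ∈ s, c i • E i *ᵥ v i)‖ ≤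
      ∑ i ∈ s, ‖c i‖ * (‖E i‖ * ‖WithLp.toLp 2 (v i)‖) := by
  rw [WithLp.toLp_sum]
  refine norm_sum_le_of_le s fun i _ => ?_
  rw [WithLp.toLp_smul, norm_smul]
  gcongr
  exact l2_opNorm_mulVec (E i) (WithLp.toLp 2 (v i))

/-- For GMRES, `W` is `V_m` and `B` is `V * H̄`. -/
theorem inexact_gmres_residual_gap_general [Fintype ι] [Fintype m] [Fintype n] [DecidableEq n]
    {A : Matrix m n 𝕜} {E : ι → Matrix m n 𝕜} {W : Matrix n ι 𝕜} {B : Matrix m ι 𝕜}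
    (hArnoldi : ∀ i, (A + E i) *ᵥ W.col i = B.col i) (r₀ : m → 𝕜) (y : ι → 𝕜) :
    (r₀ - A *ᵥ (W *ᵥ y)) - (r₀ - B *ᵥ y) = ∑ i, y i • E i *ᵥ W.col i ∧
      ‖WithLp.toLp 2 ((r₀ - A *ᵥ (W *ᵥ y)) - (r₀ - B *ᵥ y))‖ ≤
        ∑ i, ‖y i‖ * (‖E i‖ * ‖WithLp.toLp 2 (W.col i)‖) := by
  rw [sub_sub_sub_cancel_left, mulVec_sub_mulVec_mulVec_eq_sum hArnoldi]
  exact ⟨rfl, norm_toLp_sum_smul_mulVec_le Finset.univ y E W.col⟩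

end MatrixNorms

/-- in the inexact Arnoldi relation `(A + E_i)·v_i = V·H̄·e_i`,
the gap between the true residual `r = r0 − A·V_m·y` and the computed residual
`r̃ = r0 − V·H̄·y` is `Σ_i y_i · E_i·v_i`, so `‖r − r̃‖ ≤ Σ_i |y_i|·‖E_i‖`. -/
theorem inexact_gmres_residual_gap (n m : ℕ) (A : Matrix (Fin n) (Fin n) ℂ)
    (E : Fin m → Matrix (Fin n) (Fin n) ℂ)
    (r0 : Fin n → ℂ)
    (V : Matrix (Fin n) (Fin (m + 1)) ℂ) (hV : Vᴴ * V = 1)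
    (H : Matrix (Fin (m + 1)) (Fin m) ℂ)
    (hArnoldi : ∀ i : Fin m,
      (A + E i).mulVec (fun l => V l i.castSucc) = (V * H).mulVec (Pi.single i 1)) :
    ∀ y : Fin m → ℂ,
      ((r0 - A.mulVec ((V.submatrix id Fin.castSucc).mulVec y)) -
          (r0 - (V * H).mulVec y) =
        ∑ i : Fin m, y i • (E i).mulVec (fun l => V l i.castSucc)) ∧
      vecNorm ((r0 - A.mulVec ((V.submatrix id Fin.castSucc).mulVec y)) -
          (r0 - (V * H).mulVec y)) ≤
        ∑ i : Fin m, ‖y i‖ * matNorm (E i) := by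
  intro y
  have norm_col (i : Fin m) : ‖WithLp.toLp 2 ((V.submatrix id Fin.castSucc).col i)‖ = 1 :=
    ((orthonormal_toLp_col_iff V).2 hV).1 i.castSucc
  have gap := inexact_gmres_residual_gap_general (W := V.submatrix id Fin.castSucc)
    (fun i => (hArnoldi i).trans (mulVec_single_one (V * H) i)) r0 y
  simp only [norm_col, mul_one, ← matNorm_eq_l2_opNorm] at gap
  exact gap
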